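/- Let f be the local rule of width 4 with code number 60200, and define g : ℤ^4 → ℤ by g(x_0,x_1,x_2,x_3) = x_1 − 1 + Θ(x_2 − x_1 − 2) − δ_{1, x_2 − x_1}·Θ(x_1 − x_0 − 1). Then for every strictly increasing s : ℤ → ℤ, the function t = g_{∞,1}(s) is strictly increasing and φ(t) = f_∞(φ(s)). -/

import Mathlib

/-- For a (strictly increasing) `s : ℤ → ℤ`, `phi s` is the occupancy bisequence:
`phi s i = 1` iff `i` lies in the range of `s`. -/
noncomputable def phi (s : ℤ → ℤ) (i : ℤ) : Fin 2 :=
  haveI := Classical.propDecidable (i ∈ Set.range s)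
  if i ∈ Set.range s then 1 else 0

/-- The local rule of width 4 with code number `C`: `f(x₁,x₂,x₃,x₄)` is the
binary digit of `C` at position `8x₁ + 4x₂ + 2x₃ + x₄`. -/
def ruleOfCode (C : ℕ) (x : Fin 4 → Fin 2) : Fin 2 :=
  if C.testBit (8 * (x 0 : ℕ) + 4 * (x 1 : ℕ) + 2 * (x 2 : ℕ) + (x 3 : ℕ)) then 1 else 0

/-- The step function: `Θ(m) = 1` if `m > 0` and `Θ(m) = 0` otherwise. -/
def theta (m : ℤ) : ℤ := if 0 < m then 1 else 0

/-- The delta function: `δ_{m,n} = 1` if `m = n` and `δ_{m,n} = 0` otherwise. -/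
def deltaZ (m k : ℤ) : ℤ := if m = k then 1 else 0

/-!
The particle in position `s k` never jumps right and never by more than two sites, and how far it
jumps is decided by the occupation of the sites around it. Site `i` is therefore occupied after one
step iff the particle at `i` stays, the one at `i + 1` jumps one site or the one at `i + 2` jumps
two sites. Written in terms of occupied sites these three events involve only `i, …, i + 3`, and
they are `100*`, `*101` or `111*`, and `*011`, which together are the words accepted by rule 60200.
-/

section Range

open Set

theorem exists_apply_eq_and_iff {α β : Type*} (f : α → β) (x : β) (P : β → Prop) :
    (∃ a, f a = x ∧ P (f a)) ↔ x ∈ range f ∧ P x := by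
  constructor
  · rintro ⟨a, rfl, ha⟩
    exact ⟨mem_range_self a, ha⟩
  · rintro ⟨⟨a, rfl⟩, ha⟩
    exact ⟨a, rfl, ha⟩

variable {α β : Type*} [LinearOrder α] [Preorder β] {s : α → β} {k l : α} {x : β}

theorem apply_le_of_mem_range_of_covBy (hs : StrictMono s) (hkl : k ⋖ l) (hx : x ∈ range s)
    (hkx : s k < x) : s l ≤ x := by
  obtain ⟨j, rfl⟩ := hx
  exact hs.monotone (hkl.ge_of_gt (hs.lt_iff_lt.1 hkx))

theorem le_apply_of_mem_range_of_covBy (hs : StrictMono s) (hkl : k ⋖ l) (hx : x ∈ range s)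
    (hxl : x < s l) : x ≤ s k :=
  apply_le_of_mem_range_of_covBy hs.dual hkl.toDual hx hxl

end Range

section Gaps

open Set

variable {α : Type*} [LinearOrder α] {s : α → ℤ} {k l : α}

theorem add_one_mem_range_iff (hs : StrictMono s) (hkl : k ⋖ l) :
    s k + 1 ∈ range s ↔ s l = s k + 1 := by
  refine ⟨fun hmem => ?_, fun h => ⟨l, h⟩⟩
  have hle : s l ≤ s k + 1 := apply_le_of_mem_range_of_covBy hs hkl hmem (lt_add_one _)
  exact hle.antisymm (Order.add_one_le_of_lt (hs hkl.lt))

theorem sub_one_mem_range_iff (hs : StrictMono s) (hkl : k ⋖ l) :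
    s l - 1 ∈ range s ↔ s k = s l - 1 := by
  refine ⟨fun hmem => ?_, fun h => ⟨k, h⟩⟩
  have hle : s l - 1 ≤ s k := le_apply_of_mem_range_of_covBy hs hkl hmem (sub_one_lt _)
  exact (Order.le_sub_one_of_lt (hs hkl.lt)).antisymm hle

theorem add_one_notMem_and_add_two_mem_range_iff (hs : StrictMono s) (hkl : k ⋖ l) :
    s k + 1 ∉ range s ∧ s k + 2 ∈ range s ↔ s l = s k + 2 := by
  rw [add_one_mem_range_iff hs hkl]
  refine ⟨fun ⟨hne, hmem⟩ => ?_, fun h => ⟨by lia, l, h⟩⟩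
  have hle : s l ≤ s k + 2 := apply_le_of_mem_range_of_covBy hs hkl hmem (by lia)
  have hlt : s k + 1 < s l := (Order.add_one_le_of_lt (hs hkl.lt)).lt_of_ne' hne
  lia

theorem add_one_notMem_and_add_two_notMem_range_iff (hs : StrictMono s) (hkl : k ⋖ l) :
    s k + 1 ∉ range s ∧ s k + 2 ∉ range s ↔ s k + 2 < s l := by
  have hlt : s k < s l := hs hkl.lt
  have hone := add_one_mem_range_iff hs hkl
  have htwo := add_one_notMem_and_add_two_mem_range_iff hs hkl
  grind

end Gaps

section Particle

/-- The particle mapping `g` of rule 60200: the new position of a particle at `b` whose neighbouring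
particles are at `a` and `c`. The fourth argument of `g`, on which it does not depend, is left
out. -/
def particleMap (a b c : ℤ) : ℤ :=
  b - 1 + theta (c - b - 2) - deltaZ 1 (c - b) * theta (b - a - 1)

variable {a b c d : ℤ}

theorem particleMap_mem_Icc (a b c : ℤ) : particleMap a b c ∈ Set.Icc (b - 2) b := by
  unfold particleMap theta deltaZ
  rw [Set.mem_Icc]
  split_ifs <;> lia

theorem particleMap_eq_self_iff : particleMap a b c = b ↔ b + 2 < c := by
  unfold particleMap theta deltaZ
  split_ifs <;> lia

theorem particleMap_eq_sub_two_iff : particleMap a b c = b - 2 ↔ a < b - 1 ∧ c = b + 1 := by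
  unfold particleMap theta deltaZ
  split_ifs <;> lia

theorem particleMap_eq_sub_one_iff (hab : a < b) (hbc : b < c) :
    particleMap a b c = b - 1 ↔ c = b + 2 ∨ a = b - 1 ∧ c = b + 1 := by
  unfold particleMap theta deltaZ
  split_ifs <;> lia

theorem le_particleMap (hab : a < b) : a ≤ particleMap a b c := by
  have hmem := Set.mem_Icc.1 (particleMap_mem_Icc a b c)
  have htwo := particleMap_eq_sub_two_iff (a := a) (b := b) (c := c)
  lia

theorem particleMap_lt_particleMap (hbc : b < c) : particleMap a b c < particleMap b c d := by
  have hle := (particleMap_mem_Icc a b c).2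
  by_cases hgap : b + 2 < c
  · have hge := (particleMap_mem_Icc b c d).1
    lia
  · calc particleMap a b c < b := hle.lt_of_ne (mt particleMap_eq_self_iff.1 hgap)
      _ ≤ particleMap b c d := le_particleMap hbc

end Particle

section Global

open Set

/-- The global map `g_{∞,1}` of the particle mapping `g` of rule 60200: all particles of the
configuration `s` jump simultaneously. -/
def globalParticleMap (s : ℤ → ℤ) (i : ℤ) : ℤ :=
  particleMap (s (i - 1)) (s i) (s (i + 1))

variable {s : ℤ → ℤ}

theorem strictMono_globalParticleMap (hs : StrictMono s) : StrictMono (globalParticleMap s) := by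
  refine strictMono_int_of_lt_succ fun k => ?_
  unfold globalParticleMap
  rw [add_sub_cancel_right]
  exact particleMap_lt_particleMap (hs (lt_add_one k))

theorem globalParticleMap_eq_self_iff (hs : StrictMono s) (k : ℤ) :
    globalParticleMap s k = s k ↔ s k + 1 ∉ range s ∧ s k + 2 ∉ range s := by
  rw [add_one_notMem_and_add_two_notMem_range_iff hs (Order.covBy_add_one k)]
  exact particleMap_eq_self_iff

theorem globalParticleMap_eq_sub_one_iff (hs : StrictMono s) (k : ℤ) :
    globalParticleMap s k = s k - 1 ↔
      s k + 1 ∉ range s ∧ s k + 2 ∈ range s ∨ s k - 1 ∈ range s ∧ s k + 1 ∈ range s := by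
  rw [add_one_notMem_and_add_two_mem_range_iff hs (Order.covBy_add_one k),
    sub_one_mem_range_iff hs (Order.sub_one_covBy k),
    add_one_mem_range_iff hs (Order.covBy_add_one k)]
  exact particleMap_eq_sub_one_iff (hs (sub_one_lt k)) (hs (lt_add_one k))

theorem globalParticleMap_eq_sub_two_iff (hs : StrictMono s) (k : ℤ) :
    globalParticleMap s k = s k - 2 ↔ s k - 1 ∉ range s ∧ s k + 1 ∈ range s := by
  have hlt : s (k - 1) < s k := hs (sub_one_lt k)
  rw [sub_one_mem_range_iff hs (Order.sub_one_covBy k),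
    add_one_mem_range_iff hs (Order.covBy_add_one k)]
  refine particleMap_eq_sub_two_iff.trans (and_congr_left' ?_)
  lia

theorem mem_range_globalParticleMap_iff_exists (s : ℤ → ℤ) (i : ℤ) :
    i ∈ range (globalParticleMap s) ↔
      (∃ k, s k = i ∧ globalParticleMap s k = s k) ∨
      (∃ k, s k = i + 1 ∧ globalParticleMap s k = s k - 1) ∨
      ∃ k, s k = i + 2 ∧ globalParticleMap s k = s k - 2 := by
  simp only [mem_range, ← exists_or]
  refine exists_congr fun k => ?_
  have hmem : globalParticleMap s k ∈ Icc (s k - 2) (s k) := particleMap_mem_Icc _ _ _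
  rw [mem_Icc] at hmem
  lia

theorem mem_range_globalParticleMap_iff (hs : StrictMono s) (i : ℤ) :
    i ∈ range (globalParticleMap s) ↔
      (i ∈ range s ∧ i + 1 ∉ range s ∧ i + 2 ∉ range s) ∨
      (i + 1 ∈ range s ∧
        (i + 2 ∉ range s ∧ i + 3 ∈ range s ∨ i ∈ range s ∧ i + 2 ∈ range s)) ∨
      (i + 2 ∈ range s ∧ i + 1 ∉ range s ∧ i + 3 ∈ range s) := by
  simp only [mem_range_globalParticleMap_iff_exists, globalParticleMap_eq_self_iff hs,
    globalParticleMap_eq_sub_one_iff hs, globalParticleMap_eq_sub_two_iff hs]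
  rw [exists_apply_eq_and_iff s i fun x => x + 1 ∉ range s ∧ x + 2 ∉ range s,
    exists_apply_eq_and_iff s (i + 1) fun x =>
      x + 1 ∉ range s ∧ x + 2 ∈ range s ∨ x - 1 ∈ range s ∧ x + 1 ∈ range s,
    exists_apply_eq_and_iff s (i + 2) fun x => x - 1 ∉ range s ∧ x + 1 ∈ range s]
  ring_nf

end Global

theorem phi_eq_one_iff (s : ℤ → ℤ) (i : ℤ) : phi s i = 1 ↔ i ∈ Set.range s := by
  simp [phi]

theorem phi_eq_zero_iff (s : ℤ → ℤ) (i : ℤ) : phi s i = 0 ↔ i ∉ Set.range s := by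
  simp [phi]

theorem ruleOfCode_60200_eq_one_iff (x : Fin 4 → Fin 2) :
    ruleOfCode 60200 x = 1 ↔
      (x 0 = 1 ∧ x 1 = 0 ∧ x 2 = 0) ∨
      (x 1 = 1 ∧ (x 2 = 0 ∧ x 3 = 1 ∨ x 0 = 1 ∧ x 2 = 1)) ∨
      (x 2 = 1 ∧ x 1 = 0 ∧ x 3 = 1) := by
  revert x
  decide

theorem phi_globalParticleMap {s : ℤ → ℤ} (hs : StrictMono s) (i : ℤ) :
    phi (globalParticleMap s) i = ruleOfCode 60200 (fun k : Fin 4 => phi s (i + (k : ℕ))) := by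
  have eq_of_eq_one_iff : ∀ a b : Fin 2, (a = 1 ↔ b = 1) → a = b := by decide
  apply eq_of_eq_one_iff
  rw [phi_eq_one_iff, mem_range_globalParticleMap_iff hs, ruleOfCode_60200_eq_one_iff]
  simp [phi_eq_one_iff, phi_eq_zero_iff]

/-- For the conservative 4-input rule with code number 60200 and the particle
mapping `g(x₀,x₁,x₂,x₃) = x₁ - 1 + Θ(x₂ - x₁ - 2) - δ_{1, x₂ - x₁}·Θ(x₁ - x₀ - 1)`: for every strictly increasing `s : ℤ → ℤ`,
the bisequence `t = g_{∞,1}(s)`, `t i = g (s (i-1)) (s i) (s (i+1)) (s (i+2))`,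
is strictly increasing and `φ(t) = f_∞(φ(s))`. -/
theorem stmt_17 (s : ℤ → ℤ) (hs : StrictMono s) :
    StrictMono (fun i : ℤ => s i - 1 + theta (s (i + 1) - s i - 2) - deltaZ 1 (s (i + 1) - s i) * theta (s i - s (i - 1) - 1)) ∧
    ∀ i : ℤ,
      phi (fun i : ℤ => s i - 1 + theta (s (i + 1) - s i - 2) - deltaZ 1 (s (i + 1) - s i) * theta (s i - s (i - 1) - 1)) i =
        ruleOfCode 60200 (fun k : Fin 4 => phi s (i + (k : ℕ))) :=
  ⟨strictMono_globalParticleMap hs, phi_globalParticleMap hs⟩
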